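/- arXiv:2212.07165 — 3 statements merged into one kernel-verified Lean document; each statement's English description precedes it below -/
import Mathlib

section
/- Let F be a finite group of cardinality n (with n ≥ 1). Then there exists an injective group homomorphism φ : F → Alt(2n+3), where Alt(2n+3) is the alternating group on a set with 2n+3 elements (e.g. Fin (2n+3)), such that Alt(2n+3) is generated by the F-conjugates of Alt(5): the subgroup of Alt(2n+3) generated by the set { φ(f) τ φ(f)⁻¹ : f ∈ F, τ ∈ A₅ } equals all of Alt(2n+3), where A₅ denotes the subgroup of Alt(2n+3) consisting of all even permutations that fix every point outside {0,1,2,3,4}. (Lemma 3.2 of the paper.) -/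
/-!
Let `F` act by left translation on two disjoint copies of itself, and trivially on three further
points. Doubling makes every permutation even, so this is an embedding of `F` in `Alt(2n+3)`.
Number the points so that the three fixed ones and the two copies of `1` are `0, …, 4`, and let
`a ≠ b` be fixed points. If `f` carries one of these five points `y ≠ a` to `x`, it conjugates
`(a b)(a y) ∈ Alt(5)` to `(a b)(a x)`. Every `x ≠ a` arises in this way, and the elements
`(a b)(a x)` generate the alternating group.
-/

section Generation

open Equiv Equiv.Perm

variable {X : Type*} [Fintype X] [DecidableEq X]

theorem alternatingGroup_le_of_swap_mul_swap_mem {K : Subgroup (Perm X)} {a b : X}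
    (hK : ∀ x ≠ a, swap a b * swap a x ∈ K) : alternatingGroup X ≤ K := by
  have mem_of_star {x y : X} (hx : x ≠ a) (hy : y ≠ a) : swap a x * swap a y ∈ K := by
    simpa [mul_assoc] using K.mul_mem (K.inv_mem (hK x hx)) (hK y hy)
  have mem_of_ne {x y : X} (hxy : x ≠ y) : swap a b * swap x y ∈ K := by
    obtain rfl | hx := eq_or_ne x a
    · exact hK y hxy.symm
    obtain rfl | hy := eq_or_ne y a
    · simpa only [swap_comm x] using hK x hx
    rw [← swap_mul_swap_mul_swap hy hxy.symm, swap_comm y a, mul_assoc (swap a x), ← mul_assoc]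
    exact K.mul_mem (hK x hx) (mem_of_star hy hx)
  rw [← closure_three_cycles_eq_alternating, Subgroup.closure_le]
  intro σ hσ
  obtain ⟨x, hx⟩ := hσ.isCycle.nonempty_support
  have hne : σ x ≠ x := mem_support.mp hx
  rw [hσ.eq_swap_mul_swap_iff_mem_support.mpr hx]
  simpa [mul_assoc] using
    K.mul_mem (K.inv_mem (mem_of_ne hne.symm)) (mem_of_ne (σ.injective.ne hne.symm))

theorem closure_conj_fixing_compl_eq_top {ι : Type*} {φ : ι → alternatingGroup X} {S : Set X}
    {a b : X} (ha : a ∈ S) (hb : b ∈ S) (hab : a ≠ b) (hφa : ∀ i, (φ i : Perm X) a = a)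
    (hφb : ∀ i, (φ i : Perm X) b = b) (hS : ∀ x, ∃ i, ∃ y ∈ S, (φ i : Perm X) y = x) :
    Subgroup.closure {σ : alternatingGroup X | ∃ (i : ι) (τ : alternatingGroup X),
      (∀ z ∉ S, (τ : Perm X) z = z) ∧ σ = φ i * τ * (φ i)⁻¹} = ⊤ := by
  set H := Subgroup.closure {σ : alternatingGroup X | ∃ (i : ι) (τ : alternatingGroup X),
    (∀ z ∉ S, (τ : Perm X) z = z) ∧ σ = φ i * τ * (φ i)⁻¹}
  suffices h : alternatingGroup X ≤ H.map (alternatingGroup X).subtype by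
    rw [eq_top_iff, ← Subgroup.map_subtype_le_map_subtype]
    exact (Subgroup.map_subtype_le _).trans h
  refine alternatingGroup_le_of_swap_mul_swap_mem (a := a) (b := b) fun x hx => ?_
  obtain ⟨i, y, hy, rfl⟩ := hS x
  have hya : y ≠ a := by
    rintro rfl
    exact hx (hφa i)
  let τ : alternatingGroup X := ⟨swap a b * swap a y,
    mul_mem_alternatingGroup_of_isSwap ⟨a, b, hab, rfl⟩ ⟨a, y, hya.symm, rfl⟩⟩
  have hτ : ∀ z ∉ S, (τ : Perm X) z = z := by
    intro z hz
    have hne {s : X} (hs : s ∈ S) : z ≠ s := (ne_of_mem_of_not_mem hs hz).symm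
    rw [Perm.mul_apply, swap_apply_of_ne_of_ne (hne ha) (hne hy),
      swap_apply_of_ne_of_ne (hne ha) (hne hb)]
  refine ⟨φ i * τ * (φ i)⁻¹, Subgroup.subset_closure ⟨i, τ, hτ, rfl⟩, ?_⟩
  calc (φ i : Perm X) * (swap a b * swap a y) * (φ i : Perm X)⁻¹
      = swap ((φ i : Perm X) a) ((φ i : Perm X) b) *
          swap ((φ i : Perm X) a) ((φ i : Perm X) y) := by
        simp only [swap_apply_apply]; group
    _ = swap a b * swap a ((φ i : Perm X) y) := by rw [hφa, hφb]

end Generation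

section Embedding

open Equiv

variable (α β : Type*) [Fintype α] [DecidableEq α] [Fintype β] [DecidableEq β]

/-- The embedding of `Perm β` in the alternating group on `α` and two copies of `β`, in which a
permutation acts on both copies of `β` simultaneously and fixes `α` pointwise. -/
def doubledPermHom : Perm β →* alternatingGroup (α ⊕ β × Fin 2) where
  toFun σ := ⟨Perm.sumCongr 1 (prodCongrLeft fun _ => σ), by
    simp [Perm.sign_prodCongrLeft, ← sq, Int.units_sq]⟩
  map_one' := by ext (i | ⟨x, j⟩) <;> simp
  map_mul' σ τ := by ext (i | ⟨x, j⟩) <;> simp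

@[simp]
theorem doubledPermHom_apply_inl (σ : Perm β) (a : α) :
    (doubledPermHom α β σ : Perm (α ⊕ β × Fin 2)) (.inl a) = .inl a := by
  simp [doubledPermHom]

@[simp]
theorem doubledPermHom_apply_inr (σ : Perm β) (x : β) (j : Fin 2) :
    (doubledPermHom α β σ : Perm (α ⊕ β × Fin 2)) (.inr (x, j)) = .inr (σ x, j) := by
  simp [doubledPermHom]

theorem doubledPermHom_injective : Function.Injective (doubledPermHom α β) := by
  intro σ τ h
  ext x
  have hx : (doubledPermHom α β σ : Perm (α ⊕ β × Fin 2)) (.inr (x, 0)) =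
      (doubledPermHom α β τ : Perm (α ⊕ β × Fin 2)) (.inr (x, 0)) := by rw [h]
  simpa using hx

end Embedding

theorem exists_sum_prod_equiv_fin {β : Type*} [Fintype β] (b : β) (k m : ℕ) :
    ∃ e : Fin k ⊕ β × Fin m ≃ Fin (m * Fintype.card β + k),
      (∀ i, (e (.inl i) : ℕ) = i) ∧ ∀ j, (e (.inr (b, j)) : ℕ) = k + j := by
  classical
  have hcard : 0 < Fintype.card β := Fintype.card_pos_iff.mpr ⟨b⟩
  let g : β ≃ Fin (Fintype.card β) := (Fintype.equivFin β).setValue b ⟨0, hcard⟩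
  have hg : g b = ⟨0, hcard⟩ := Equiv.setValue_eq _ _ _
  let e := ((Equiv.refl (Fin k)).sumCongr ((g.prodCongr (.refl (Fin m))).trans
    finProdFinEquiv)).trans finSumFinEquiv
  exact ⟨e.trans (finCongr (by ring)), fun i => by simp [e], fun j => by simp [e, hg]⟩

/-- Every finite group `F` of order `n` embeds into the alternating group
`Alt(2n+3)` in such a way that `Alt(2n+3)` is generated by the `F`-conjugates of the
copy of `Alt(5)` consisting of the even permutations fixing every point outside
`{0, 1, 2, 3, 4}`. -/
theorem finite_group_embeds_with_alt_conjugates (F : Type*) [Group F] [Fintype F]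
    (n : ℕ) (hn : Fintype.card F = n) (hn1 : 1 ≤ n) :
    ∃ φ : F →* ↥(alternatingGroup (Fin (2 * n + 3))),
      Function.Injective φ ∧
      Subgroup.closure
        { x : ↥(alternatingGroup (Fin (2 * n + 3))) |
          ∃ (f : F) (τ : ↥(alternatingGroup (Fin (2 * n + 3)))),
            (∀ i : Fin (2 * n + 3), 5 ≤ (i : ℕ) →
              (τ : Equiv.Perm (Fin (2 * n + 3))) i = i) ∧
            x = φ f * τ * (φ f)⁻¹ } = ⊤ := by
  classical
  subst hn
  obtain ⟨e, he_inl, he_inr⟩ := exists_sum_prod_equiv_fin (1 : F) 3 2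
  let φ : F →* alternatingGroup (Fin (2 * Fintype.card F + 3)) :=
    (e.altCongrHom.toMonoidHom.comp (doubledPermHom (Fin 3) F)).comp (MulAction.toPermHom F F)
  have hφ_inl (f : F) (i : Fin 3) : (φ f : Equiv.Perm _) (e (.inl i)) = e (.inl i) := by
    simp [φ]
  have hφ_inr (f : F) (j : Fin 2) : (φ f : Equiv.Perm _) (e (.inr (1, j))) = e (.inr (f, j)) := by
    simp [φ]
  refine ⟨φ, e.altCongrHom.injective.comp
    ((doubledPermHom_injective (Fin 3) F).comp MulAction.toPerm_injective), ?_⟩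
  let S : Set (Fin (2 * Fintype.card F + 3)) := {x | (x : ℕ) < 5}
  have h_inl (i : Fin 3) : e (.inl i) ∈ S := by grind
  have h_inr (j : Fin 2) : e (.inr (1, j)) ∈ S := by grind
  have h_orbits : ∀ x, ∃ f, ∃ y ∈ S, (φ f : Equiv.Perm _) y = x := by
    refine e.surjective.forall.mpr ?_
    rintro (i | ⟨f, j⟩)
    exacts [⟨1, _, h_inl i, hφ_inl 1 i⟩, ⟨f, _, h_inr j, hφ_inr f j⟩]
  simpa only [S, Set.mem_ofPred_eq, not_lt] using closure_conj_fixing_compl_eq_top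
    (h_inl 0) (h_inl 1) (by simp) (hφ_inl · 0) (hφ_inl · 1) h_orbits
end

section
/- Let P be a property of groups that is invariant under group isomorphism, closed under passing to subgroups, and closed under direct products of two groups. If G and H are groups that are locally P up to powers, then G × H is locally P up to powers. (Lemma 3.3 of the paper.) -/
/-- A group `Γ` is locally `P` up to powers if for every finite list of elements
`γ₁, …, γ_k ∈ Γ` there are positive integers `t₁, …, t_k` such that the subgroup
`⟨γ₁^{t₁}, …, γ_k^{t_k}⟩` satisfies `P`. -/
def LocallyUpToPowers (P : (H : Type u) → [inst : Group H] → Prop)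
    (Γ : Type u) [Group Γ] : Prop :=
  ∀ (k : ℕ) (γ : Fin k → Γ), ∃ t : Fin k → ℕ, (∀ i, 0 < t i) ∧
    P (Subgroup.closure (Set.range fun i => γ i ^ t i))

theorem closure_range_pow_le_of_dvd {ι Γ : Type*} [Group Γ] (γ : ι → Γ) {s t : ι → ℕ}
    (hst : ∀ i, s i ∣ t i) :
    Subgroup.closure (Set.range fun i => γ i ^ t i) ≤
      Subgroup.closure (Set.range fun i => γ i ^ s i) := by
  rw [Subgroup.closure_le]
  rintro _ ⟨i, rfl⟩
  obtain ⟨m, hm⟩ := hst i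
  have hmem : γ i ^ s i ∈ Subgroup.closure (Set.range fun i => γ i ^ s i) :=
    Subgroup.subset_closure ⟨i, rfl⟩
  simpa only [hm, pow_mul, SetLike.mem_coe] using pow_mem hmem m

theorem closure_le_prod_closure_image {G H : Type*} [Group G] [Group H] (S : Set (G × H)) :
    Subgroup.closure S ≤
      (Subgroup.closure (Prod.fst '' S)).prod (Subgroup.closure (Prod.snd '' S)) :=
  Subgroup.le_prod_iff.2
    ⟨(MonoidHom.map_closure (MonoidHom.fst G H) S).le,
      (MonoidHom.map_closure (MonoidHom.snd G H) S).le⟩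

theorem closure_range_pow_mul_le_prod {ι G H : Type*} [Group G] [Group H] (γ : ι → G × H)
    (s r : ι → ℕ) :
    Subgroup.closure (Set.range fun i => γ i ^ (s i * r i)) ≤
      (Subgroup.closure (Set.range fun i => (γ i).1 ^ s i)).prod
        (Subgroup.closure (Set.range fun i => (γ i).2 ^ r i)) := by
  refine (closure_le_prod_closure_image _).trans (Subgroup.prod_mono ?_ ?_)
  · rw [← Set.range_comp]
    exact closure_range_pow_le_of_dvd (fun i => (γ i).1) fun i => dvd_mul_right (s i) (r i)
  · rw [← Set.range_comp]
    exact closure_range_pow_le_of_dvd (fun i => (γ i).2) fun i => dvd_mul_left (r i) (s i)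

theorem property_of_subgroup_le {P : (H : Type u) → [Group H] → Prop}
    (hiso : ∀ (A B : Type u) [Group A] [Group B], (A ≃* B) → P A → P B)
    (hsub : ∀ (A : Type u) [Group A] (K : Subgroup A), P A → P K)
    {Γ : Type u} [Group Γ] {K L : Subgroup Γ} (hKL : K ≤ L) (hL : P L) : P K :=
  hiso _ _ (Subgroup.subgroupOfEquivOfLe hKL) (hsub _ _ hL)

/-- If `P` is an isomorphism-invariant property of groups closed under subgroups and
direct products of two groups, and `G` and `H` are locally `P` up to powers, then
`G × H` is locally `P` up to powers. -/
theorem prod_locallyUpToPowers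
    (P : (H : Type u) → [inst : Group H] → Prop)
    (hiso : ∀ (A B : Type u) [Group A] [Group B], (A ≃* B) → P A → P B)
    (hsub : ∀ (A : Type u) [Group A] (K : Subgroup A), P A → P K)
    (hprod : ∀ (A B : Type u) [Group A] [Group B], P A → P B → P (A × B))
    (G H : Type u) [Group G] [Group H]
    (hG : LocallyUpToPowers P G) (hH : LocallyUpToPowers P H) :
    LocallyUpToPowers P (G × H) := by
  intro k γ
  obtain ⟨s, hs, hPs⟩ := hG k fun i => (γ i).1
  obtain ⟨r, hr, hPr⟩ := hH k fun i => (γ i).2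
  have hPprod : P ((Subgroup.closure (Set.range fun i => (γ i).1 ^ s i)).prod
      (Subgroup.closure (Set.range fun i => (γ i).2 ^ r i))) :=
    hiso _ _ (Subgroup.prodEquiv _ _).symm (hprod _ _ hPs hPr)
  exact ⟨fun i => s i * r i, fun i => Nat.mul_pos (hs i) (hr i),
    property_of_subgroup_le hiso hsub (closure_range_pow_mul_le_prod γ s r) hPprod⟩
end

section
/- For every natural number n ≥ 5 and every permutation σ of Fin n, the order of σ satisfies 2^{n−1} · orderOf(σ) ≤ n!. In particular, Landau's function g(n), the maximal order of an element of the symmetric group Sym(n), satisfies g(n) ≤ n!/2^{n−1} for all n ≥ 5. (The elementary estimate used in the proof of Theorem 3.4 of the paper.) -/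
/-!
The order of a permutation is the least common multiple of its cycle lengths, so it is at most their
product. Since `k ^ 3 ≤ 3 ^ k` for every natural number `k`, a product of natural numbers with sum
`m` has cube at most `3 ^ m`. Hence `orderOf σ ^ 3 ≤ 3 ^ n` for a permutation `σ` of `n` points,
and it remains to see that `(2 ^ n) ^ 3 * 3 ^ n = 24 ^ n` is at most `(2 * n !) ^ 3`.
-/

open scoped Nat

theorem pow_three_le_three_pow (k : ℕ) : k ^ 3 ≤ 3 ^ k := by
  rcases lt_or_ge k 3 with hk | hk
  · interval_cases k <;> norm_num
  · induction k, hk using Nat.le_induction with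
    | base => rfl
    | succ k hk ih =>
      have h_sq : 3 * k ≤ k * k := Nat.mul_le_mul_right k hk
      have h_cube : 3 * k ^ 2 ≤ k * k ^ 2 := Nat.mul_le_mul_right (k ^ 2) hk
      calc
        (k + 1) ^ 3 ≤ k ^ 3 * 3 := by nlinarith only [hk, h_sq, h_cube]
        _ ≤ 3 ^ k * 3 := Nat.mul_le_mul_right 3 ih
        _ = 3 ^ (k + 1) := (pow_succ 3 k).symm

theorem multiset_prod_pow_three_le_three_pow_sum (s : Multiset ℕ) : s.prod ^ 3 ≤ 3 ^ s.sum := by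
  induction s using Multiset.induction_on with
  | empty => simp
  | cons k s ih =>
    rw [Multiset.prod_cons, Multiset.sum_cons, mul_pow, pow_add]
    exact Nat.mul_le_mul (pow_three_le_three_pow k) ih

theorem twentyFour_pow_le_two_mul_factorial_pow_three {n : ℕ} (hn : 5 ≤ n) :
    24 ^ n ≤ (2 * n !) ^ 3 := by
  induction n, hn using Nat.le_induction with
  | base => decide
  | succ n hn ih =>
    have h_base : 24 ≤ (n + 1) ^ 3 :=
      calc
        24 ≤ 6 ^ 3 := by norm_num
        _ ≤ (n + 1) ^ 3 := Nat.pow_le_pow_left (by lia) 3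
    calc
      24 ^ (n + 1) = 24 * 24 ^ n := pow_succ' 24 n
      _ ≤ (n + 1) ^ 3 * (2 * n !) ^ 3 := Nat.mul_le_mul h_base ih
      _ = (2 * (n + 1)!) ^ 3 := by rw [Nat.factorial_succ]; ring

section Perm

variable {α : Type*} [Fintype α]

theorem orderOf_perm_le_prod_cycleType [DecidableEq α] (σ : Equiv.Perm α) :
    orderOf σ ≤ σ.cycleType.prod := by
  have h_pos : 0 < σ.cycleType.prod :=
    Multiset.prod_pos fun _ hk ↦ zero_lt_two.trans_le (Equiv.Perm.two_le_of_mem_cycleType hk)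
  rw [← Equiv.Perm.lcm_cycleType]
  exact Nat.le_of_dvd h_pos (Multiset.lcm_dvd.2 fun _ ↦ Multiset.dvd_prod)

theorem orderOf_perm_pow_three_le_three_pow_card_support [DecidableEq α] (σ : Equiv.Perm α) :
    orderOf σ ^ 3 ≤ 3 ^ σ.support.card :=
  calc
    orderOf σ ^ 3 ≤ σ.cycleType.prod ^ 3 := Nat.pow_le_pow_left (orderOf_perm_le_prod_cycleType σ) 3
    _ ≤ 3 ^ σ.cycleType.sum := multiset_prod_pow_three_le_three_pow_sum _
    _ = 3 ^ σ.support.card := by rw [σ.sum_cycleType]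

theorem two_pow_card_mul_orderOf_perm_le (hα : 5 ≤ Fintype.card α) (σ : Equiv.Perm α) :
    2 ^ Fintype.card α * orderOf σ ≤ 2 * (Fintype.card α)! := by
  classical
  have h_order : orderOf σ ^ 3 ≤ 3 ^ Fintype.card α :=
    (orderOf_perm_pow_three_le_three_pow_card_support σ).trans <|
      Nat.pow_le_pow_right three_pos σ.support.card_le_univ
  refine le_of_pow_le_pow_left₀ three_ne_zero (Nat.zero_le _) ?_
  calc
    (2 ^ Fintype.card α * orderOf σ) ^ 3 = (2 ^ Fintype.card α) ^ 3 * orderOf σ ^ 3 := mul_pow ..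
    _ ≤ (2 ^ Fintype.card α) ^ 3 * 3 ^ Fintype.card α := Nat.mul_le_mul_left _ h_order
    _ = 24 ^ Fintype.card α := by rw [pow_right_comm, ← mul_pow]; norm_num
    _ ≤ (2 * (Fintype.card α)!) ^ 3 := twentyFour_pow_le_two_mul_factorial_pow_three hα

theorem orderOf_perm_le_factorial_div_two_pow_general (hα : 5 ≤ Fintype.card α)
    (σ : Equiv.Perm α) :
    2 ^ (Fintype.card α - 1) * orderOf σ ≤ (Fintype.card α)! ∧
    orderOf σ ≤ (Fintype.card α)! / 2 ^ (Fintype.card α - 1) := by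
  have h_mul : 2 ^ (Fintype.card α - 1) * orderOf σ ≤ (Fintype.card α)! := by
    refine Nat.le_of_mul_le_mul_left ?_ two_pos
    rw [← mul_assoc, mul_pow_sub_one (by lia)]
    exact two_pow_card_mul_orderOf_perm_le hα σ
  exact ⟨h_mul, (Nat.le_div_iff_mul_le (by positivity)).2 (by rwa [mul_comm])⟩

end Perm

/-- For `n ≥ 5`, every permutation `σ` of `Fin n` satisfies
`2^(n-1) * orderOf σ ≤ n!`. In particular Landau's function, the maximal order of an
element of `Sym(n)`, is at most `n! / 2^(n-1)`. -/
theorem orderOf_perm_le_factorial_div_two_pow (n : ℕ) (hn : 5 ≤ n)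
    (σ : Equiv.Perm (Fin n)) :
    2 ^ (n - 1) * orderOf σ ≤ n.factorial ∧
    orderOf σ ≤ n.factorial / 2 ^ (n - 1) := by
  simpa only [Fintype.card_fin] using
    orderOf_perm_le_factorial_div_two_pow_general (by rwa [Fintype.card_fin]) σ
end
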